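/- arXiv:2412.16883 — 3 statements merged into one kernel-verified Lean document; each statement's English description precedes it below -/
import Mathlib

section
/- Let (X, 𝒜) be a measurable space, μ₀ a probability measure on X, k a positive integer, y ∈ ℝ^k, and G, G_θ : X → ℝ^k measurable maps with ‖G(w)‖ ≤ M and ‖G_θ(w)‖ ≤ M for all w ∈ X, where M > 0. Define Φ(w) = (1/2)‖y − G(w)‖², Φ_θ(w) = (1/2)‖y − G_θ(w)‖², Z = ∫_X exp(−Φ) dμ₀ and Z_θ = ∫_X exp(−Φ_θ) dμ₀. Then |Z − Z_θ| ≤ (‖y‖ + M)·(∫_X ‖G(w) − G_θ(w)‖² dμ₀(w))^{1/2}. -/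
open MeasureTheory Real

/-!
Since `t ↦ exp (-t)` is 1-Lipschitz on `[0, ∞)`, the evidences differ by at most the `L¹`-distance
of the potentials. The potential is half a squared distance, so factoring a difference of squares
shows that it depends on the forward map in a `(‖y‖ + M)`-Lipschitz way on the ball of radius `M`.
Cauchy–Schwarz then replaces the `L¹`-distance of the forward maps by their `L²`-distance.
-/

theorem lipschitzOnWith_exp_neg_Ici : LipschitzOnWith 1 (fun t : ℝ => exp (-t)) (Set.Ici 0) := by
  refine (convex_Ici 0).lipschitzOnWith_of_nnnorm_deriv_le (fun t _ => by fun_prop) fun t ht => ?_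
  have hderiv : HasDerivAt (fun t : ℝ => exp (-t)) (-exp (-t)) t := by
    simpa using (hasDerivAt_neg t).exp
  rw [hderiv.deriv, nnnorm_neg, ← NNReal.coe_le_coe, coe_nnnorm, norm_of_nonneg (exp_pos _).le]
  exact exp_le_one_iff.2 (neg_nonpos.2 ht)

theorem abs_exp_neg_sub_exp_neg_le {a b : ℝ} (ha : 0 ≤ a) (hb : 0 ≤ b) :
    |exp (-a) - exp (-b)| ≤ |a - b| := by
  simpa [Real.dist_eq] using lipschitzOnWith_exp_neg_Ici.dist_le_mul a ha b hb

theorem integral_norm_le_sqrt_measureReal_univ_mul_integral_norm_sq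
    {X E : Type*} [MeasurableSpace X] {μ : Measure X} [IsFiniteMeasure μ]
    [NormedAddCommGroup E] {f : X → E} (hf : MemLp f 2 μ) :
    ∫ w, ‖f w‖ ∂μ ≤ √(μ.real Set.univ * ∫ w, ‖f w‖ ^ 2 ∂μ) := by
  have cauchy_schwarz := integral_mul_norm_le_Lp_mul_Lq (μ := μ) (f := fun _ => (1 : ℝ))
    (g := fun w => ‖f w‖) HolderConjugate.two_two (memLp_const 1) (by simpa using hf.norm)
  rw [sqrt_mul measureReal_nonneg]
  simpa [sqrt_eq_rpow] using cauchy_schwarz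

section Seminormed

variable {X E : Type*} [SeminormedAddCommGroup E]

/-- The potential `Φ_G` of a forward map `G` for the data `y`, that is, the negative
log-likelihood (up to a constant) of `y` under standard Gaussian noise. -/
noncomputable def potential (y : E) (G : X → E) (w : X) : ℝ :=
  (1 / 2) * ‖y - G w‖ ^ 2

theorem potential_nonneg (y : E) (G : X → E) (w : X) : 0 ≤ potential y G w := by
  unfold potential
  positivity

theorem abs_potential_sub_potential_le {y : E} {G G' : X → E} {w : X} {M : ℝ}
    (hG : ‖G w‖ ≤ M) (hG' : ‖G' w‖ ≤ M) :
    |potential y G w - potential y G' w| ≤ (‖y‖ + M) * ‖G w - G' w‖ := by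
  have mean_le : (‖y - G w‖ + ‖y - G' w‖) / 2 ≤ ‖y‖ + M := by
    linarith [norm_sub_le y (G w), norm_sub_le y (G' w)]
  have diff_le : |‖y - G w‖ - ‖y - G' w‖| ≤ ‖G w - G' w‖ := by
    simpa [norm_sub_rev] using abs_norm_sub_norm_le (y - G w) (y - G' w)
  calc |potential y G w - potential y G' w|
      = |(‖y - G w‖ + ‖y - G' w‖) / 2 * (‖y - G w‖ - ‖y - G' w‖)| := by
        unfold potential
        ring_nf
    _ = (‖y - G w‖ + ‖y - G' w‖) / 2 * |‖y - G w‖ - ‖y - G' w‖| := by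
        rw [abs_mul, abs_of_nonneg (by positivity)]
    _ ≤ (‖y‖ + M) * ‖G w - G' w‖ :=
        mul_le_mul mean_le diff_le (abs_nonneg _) (le_trans (by positivity) mean_le)

variable [MeasurableSpace X]

/-- The evidence `Z_G`: the normalizing constant of the posterior with potential `Φ_G` and
prior `μ`. It takes the junk value `0` if the likelihood is not integrable. -/
noncomputable def evidence (μ : Measure X) (y : E) (G : X → E) : ℝ :=
  ∫ w, exp (-potential y G w) ∂μ

theorem integrable_exp_neg_potential {μ : Measure X} [IsFiniteMeasure μ] (y : E) {G : X → E}
    (hG : AEStronglyMeasurable G μ) :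
    Integrable (fun w => exp (-potential y G w)) μ := by
  refine Integrable.of_bound (C := 1) ?_ (.of_forall fun w => ?_)
  · unfold potential
    fun_prop
  · simpa using potential_nonneg y G w

end Seminormed

section Normed

variable {X E : Type*} [MeasurableSpace X] [NormedAddCommGroup E]
  {μ : Measure X} [IsFiniteMeasure μ] {G G' : X → E} {M : ℝ}

theorem abs_evidence_sub_evidence_le_integral_norm (y : E)
    (hG : AEStronglyMeasurable G μ) (hG' : AEStronglyMeasurable G' μ)
    (hGM : ∀ᵐ w ∂μ, ‖G w‖ ≤ M) (hG'M : ∀ᵐ w ∂μ, ‖G' w‖ ≤ M) :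
    |evidence μ y G - evidence μ y G'| ≤ (‖y‖ + M) * ∫ w, ‖G w - G' w‖ ∂μ := by
  have hexp := integrable_exp_neg_potential y hG
  have hexp' := integrable_exp_neg_potential y hG'
  have hdiff : Integrable (fun w => ‖G w - G' w‖) μ :=
    ((Integrable.of_bound hG M hGM).sub (Integrable.of_bound hG' M hG'M)).norm
  calc |evidence μ y G - evidence μ y G'|
      = |∫ w, (exp (-potential y G w) - exp (-potential y G' w)) ∂μ| := by
        rw [integral_sub hexp hexp', evidence, evidence]
    _ ≤ ∫ w, |exp (-potential y G w) - exp (-potential y G' w)| ∂μ := abs_integral_le_integral_abs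
    _ ≤ ∫ w, (‖y‖ + M) * ‖G w - G' w‖ ∂μ := by
        refine integral_mono_ae (hexp.sub hexp').abs (hdiff.const_mul _) ?_
        filter_upwards [hGM, hG'M] with w hw hw'
        exact (abs_exp_neg_sub_exp_neg_le (potential_nonneg y G w) (potential_nonneg y G' w)).trans
          (abs_potential_sub_potential_le hw hw')
    _ = (‖y‖ + M) * ∫ w, ‖G w - G' w‖ ∂μ := integral_const_mul _ _

theorem evidence_difference_bound_general (y : E) (hM : 0 ≤ M)
    (hG : AEStronglyMeasurable G μ) (hG' : AEStronglyMeasurable G' μ)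
    (hGM : ∀ᵐ w ∂μ, ‖G w‖ ≤ M) (hG'M : ∀ᵐ w ∂μ, ‖G' w‖ ≤ M) :
    |evidence μ y G - evidence μ y G'| ≤
      (‖y‖ + M) * √(μ.real Set.univ * ∫ w, ‖G w - G' w‖ ^ 2 ∂μ) := by
  have hL2 : MemLp (fun w => G w - G' w) 2 μ :=
    (MemLp.of_bound hG M hGM).sub (MemLp.of_bound hG' M hG'M)
  calc |evidence μ y G - evidence μ y G'|
      ≤ (‖y‖ + M) * ∫ w, ‖G w - G' w‖ ∂μ :=
        abs_evidence_sub_evidence_le_integral_norm y hG hG' hGM hG'M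
    _ ≤ (‖y‖ + M) * √(μ.real Set.univ * ∫ w, ‖G w - G' w‖ ^ 2 ∂μ) := by
        gcongr
        exact integral_norm_le_sqrt_measureReal_univ_mul_integral_norm_sq hL2

end Normed

/-- Evidence-difference estimate: `|Z − Z_θ| ≤ (‖y‖+M)·‖G − G_θ‖_{L²(μ₀)}`. -/
theorem evidence_difference_bound
    {X : Type*} [MeasurableSpace X]
    (μ₀ : Measure X) [IsProbabilityMeasure μ₀]
    (k : ℕ) (hk : 0 < k) (y : EuclideanSpace ℝ (Fin k))
    (M : ℝ) (hM : 0 < M)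
    (G Gθ : X → EuclideanSpace ℝ (Fin k))
    (hG : Measurable G) (hGθ : Measurable Gθ)
    (hGbd : ∀ w : X, ‖G w‖ ≤ M) (hGθbd : ∀ w : X, ‖Gθ w‖ ≤ M)
    (Z Zθ : ℝ)
    (hZ : Z = ∫ w, Real.exp (-((1/2) * ‖y - G w‖ ^ 2)) ∂μ₀)
    (hZθ : Zθ = ∫ w, Real.exp (-((1/2) * ‖y - Gθ w‖ ^ 2)) ∂μ₀) :
    |Z - Zθ| ≤ (‖y‖ + M) * Real.sqrt (∫ w, ‖G w - Gθ w‖ ^ 2 ∂μ₀) := by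
  simpa only [hZ, hZθ, evidence, potential, probReal_univ, one_mul] using
    evidence_difference_bound_general (μ := μ₀) y hM.le
      hG.aestronglyMeasurable hGθ.aestronglyMeasurable (.of_forall hGbd) (.of_forall hGθbd)
end

section
/- Let (X, 𝒜) be a measurable space, μ₀ a probability measure on X, k a positive integer, y ∈ ℝ^k, and G, G_θ : X → ℝ^k measurable maps with ‖G(w)‖ ≤ M and ‖G_θ(w)‖ ≤ M for all w ∈ X, where M > 0. Define Φ(w) = (1/2)‖y − G(w)‖² and Φ_θ(w) = (1/2)‖y − G_θ(w)‖². Then ∫_X (exp(−Φ(w)/2) − exp(−Φ_θ(w)/2))² dμ₀(w) ≤ (1/4)(‖y‖ + M)² · ∫_X ‖G(w) − G_θ(w)‖² dμ₀(w). -/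
open MeasureTheory Real

theorem abs_exp_sub_exp_le (a b : ℝ) : |exp a - exp b| ≤ exp (max a b) * |a - b| := by
  wlog hab : b ≤ a generalizing a b
  · simpa only [abs_sub_comm, max_comm] using this b a (le_of_not_ge hab)
  rw [abs_of_nonneg (sub_nonneg.2 (exp_le_exp.2 hab)), abs_of_nonneg (sub_nonneg.2 hab),
    max_eq_left hab]
  calc exp a - exp b = exp a * (1 - exp (b - a)) := by
        rw [mul_sub, mul_one, ← exp_add, add_sub_cancel]
    _ ≤ exp a * (a - b) := by
        refine mul_le_mul_of_nonneg_left ?_ (exp_pos a).le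
        linarith [add_one_le_exp (b - a)]

theorem abs_exp_neg_half_sub_exp_neg_half_le {a b : ℝ} (ha : 0 ≤ a) (hb : 0 ≤ b) :
    |exp (-a / 2) - exp (-b / 2)| ≤ 1 / 2 * |a - b| := by
  have hexp : exp (max (-a / 2) (-b / 2)) ≤ 1 :=
    exp_le_one_iff.2 (max_le (by linarith) (by linarith))
  calc |exp (-a / 2) - exp (-b / 2)|
      ≤ exp (max (-a / 2) (-b / 2)) * |-a / 2 - -b / 2| := abs_exp_sub_exp_le _ _
    _ ≤ |-a / 2 - -b / 2| := mul_le_of_le_one_left (abs_nonneg _) hexp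
    _ = 1 / 2 * |a - b| := by
        rw [show -a / 2 - -b / 2 = -(1 / 2 * (a - b)) by ring, abs_neg, abs_mul,
          abs_of_pos one_half_pos]

theorem abs_norm_sq_sub_norm_sq_le {E : Type*} [SeminormedAddCommGroup E] (u v : E) :
    |‖u‖ ^ 2 - ‖v‖ ^ 2| ≤ (‖u‖ + ‖v‖) * ‖u - v‖ := by
  rw [sq_sub_sq, abs_mul, abs_of_nonneg (by positivity)]
  gcongr
  exact abs_norm_sub_norm_le u v

theorem integral_norm_pow_le_of_norm_le_mul {X E F : Type*} [MeasurableSpace X]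
    [NormedAddCommGroup E] [NormedAddCommGroup F] {μ : Measure X} {f : X → E} {g : X → F}
    {c : ℝ} {p : ℕ} (hp : p ≠ 0) (hf : AEStronglyMeasurable f μ) (hg : MemLp g p μ)
    (hfg : ∀ᵐ x ∂μ, ‖f x‖ ≤ c * ‖g x‖) :
    ∫ x, ‖f x‖ ^ p ∂μ ≤ c ^ p * ∫ x, ‖g x‖ ^ p ∂μ := by
  rw [← integral_const_mul]
  refine integral_mono_ae ((hg.of_le_mul hf hfg).integrable_norm_pow hp)
    ((hg.integrable_norm_pow hp).const_mul _) ?_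
  filter_upwards [hfg] with x hx
  rw [← mul_pow]
  gcongr

/-- The potential `Φ = ‖y - z‖² / 2` of a predicted observation `z` given the data `y`, i.e. the
negative log-likelihood under standard Gaussian noise up to an additive constant. The forward map
is not part of the definition: `Φ_G(w)` is `gaussianPotential y (G w)`. -/
noncomputable def gaussianPotential {E : Type*} [SeminormedAddCommGroup E] (y z : E) : ℝ :=
  (1 / 2) * ‖y - z‖ ^ 2

namespace gaussianPotential

variable {E : Type*} [SeminormedAddCommGroup E]

theorem nonneg (y z : E) : 0 ≤ gaussianPotential y z := by
  unfold gaussianPotential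
  positivity

theorem continuous_right (y : E) : Continuous (gaussianPotential y) := by
  unfold gaussianPotential
  fun_prop

theorem abs_sub_le (y u v : E) :
    |gaussianPotential y u - gaussianPotential y v|
      ≤ 1 / 2 * (‖y - u‖ + ‖y - v‖) * ‖u - v‖ := by
  have h := abs_norm_sq_sub_norm_sq_le (y - u) (y - v)
  rw [sub_sub_sub_cancel_left, norm_sub_rev v u] at h
  rw [gaussianPotential, gaussianPotential, ← mul_sub, abs_mul, abs_of_pos one_half_pos, mul_assoc]
  gcongr

theorem abs_sub_le_of_norm_le {y u v : E} {M : ℝ} (hu : ‖u‖ ≤ M) (hv : ‖v‖ ≤ M) :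
    |gaussianPotential y u - gaussianPotential y v| ≤ (‖y‖ + M) * ‖u - v‖ := by
  have hyu : ‖y - u‖ ≤ ‖y‖ + M := norm_sub_le_of_le le_rfl hu
  have hyv : ‖y - v‖ ≤ ‖y‖ + M := norm_sub_le_of_le le_rfl hv
  refine (abs_sub_le y u v).trans ?_
  gcongr
  linarith

theorem abs_exp_neg_half_sub_le_of_norm_le {y u v : E} {M : ℝ} (hu : ‖u‖ ≤ M) (hv : ‖v‖ ≤ M) :
    |exp (-gaussianPotential y u / 2) - exp (-gaussianPotential y v / 2)|
      ≤ 1 / 2 * (‖y‖ + M) * ‖u - v‖ := by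
  rw [mul_assoc]
  refine (abs_exp_neg_half_sub_exp_neg_half_le (nonneg y u) (nonneg y v)).trans ?_
  gcongr
  exact abs_sub_le_of_norm_le hu hv

end gaussianPotential

theorem sqrt_likelihood_difference_bound_general
    {X E : Type*} [MeasurableSpace X] [NormedAddCommGroup E] {μ : Measure X} (y : E) {M : ℝ}
    {G Gθ : X → E} (hG : AEStronglyMeasurable G μ) (hGθ : AEStronglyMeasurable Gθ μ)
    (hGbd : ∀ᵐ w ∂μ, ‖G w‖ ≤ M) (hGθbd : ∀ᵐ w ∂μ, ‖Gθ w‖ ≤ M)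
    (hdiff : MemLp (fun w => G w - Gθ w) 2 μ) :
    ∫ w, (exp (-gaussianPotential y (G w) / 2) - exp (-gaussianPotential y (Gθ w) / 2)) ^ 2 ∂μ
      ≤ (1 / 4) * (‖y‖ + M) ^ 2 * ∫ w, ‖G w - Gθ w‖ ^ 2 ∂μ := by
  have hcont : Continuous fun z : E => exp (-gaussianPotential y z / 2) := by
    have := gaussianPotential.continuous_right y
    fun_prop
  have hpointwise : ∀ᵐ w ∂μ,
      ‖exp (-gaussianPotential y (G w) / 2) - exp (-gaussianPotential y (Gθ w) / 2)‖
        ≤ 1 / 2 * (‖y‖ + M) * ‖G w - Gθ w‖ := by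
    filter_upwards [hGbd, hGθbd] with w hw hθw
    exact gaussianPotential.abs_exp_neg_half_sub_le_of_norm_le hw hθw
  have hint := integral_norm_pow_le_of_norm_le_mul two_ne_zero
    ((hcont.comp_aestronglyMeasurable hG).sub (hcont.comp_aestronglyMeasurable hGθ))
    hdiff hpointwise
  have hconst : (1 / 2 * (‖y‖ + M)) ^ 2 = 1 / 4 * (‖y‖ + M) ^ 2 := by ring
  simpa only [Pi.sub_apply, norm_eq_abs, sq_abs, hconst] using hint

/-- Bound on the `L²(μ₀)`-difference of the square roots of the true and
surrogate likelihoods (the term `I₁` in the proof of Theorem 3.2). -/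
theorem sqrt_likelihood_difference_bound
    {X : Type*} [MeasurableSpace X]
    (μ₀ : Measure X) [IsProbabilityMeasure μ₀]
    (k : ℕ) (hk : 0 < k) (y : EuclideanSpace ℝ (Fin k))
    (M : ℝ) (hM : 0 < M)
    (G Gθ : X → EuclideanSpace ℝ (Fin k))
    (hG : Measurable G) (hGθ : Measurable Gθ)
    (hGbd : ∀ w : X, ‖G w‖ ≤ M) (hGθbd : ∀ w : X, ‖Gθ w‖ ≤ M) :
    ∫ w, (Real.exp (-((1/2) * ‖y - G w‖ ^ 2) / 2)
          - Real.exp (-((1/2) * ‖y - Gθ w‖ ^ 2) / 2)) ^ 2 ∂μ₀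
      ≤ (1/4) * (‖y‖ + M) ^ 2 * ∫ w, ‖G w - Gθ w‖ ^ 2 ∂μ₀ :=
  sqrt_likelihood_difference_bound_general y hG.aestronglyMeasurable hGθ.aestronglyMeasurable
    (ae_of_all _ hGbd) (ae_of_all _ hGθbd) <|
    .of_bound (hG.sub hGθ).aestronglyMeasurable (M + M) <|
      ae_of_all _ fun w => norm_sub_le_of_le (hGbd w) (hGθbd w)
end

section
/- Let (X, 𝒜) be a measurable space, μ₀ a probability measure on X, k a positive integer, y ∈ ℝ^k, M > 0, and let G : X → ℝ^k and G_n : X → ℝ^k (n ∈ ℕ) be measurable maps with ‖G(w)‖ ≤ M and ‖G_n(w)‖ ≤ M for all w ∈ X and all n. Define Φ(w) = (1/2)‖y − G(w)‖², Φ_n(w) = (1/2)‖y − G_n(w)‖², Z = ∫_X exp(−Φ) dμ₀ and Z_n = ∫_X exp(−Φ_n) dμ₀. If ∫_X ‖G(w) − G_n(w)‖² dμ₀(w) → 0 as n → ∞, then ∫_X (√(exp(−Φ(w))/Z) − √(exp(−Φ_n(w))/Z_n))² dμ₀(w) → 0 as n → ∞. -/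
open MeasureTheory Real Filter

/-!
The square roots of the two posterior densities are the vectors `√(exp (-Φ))` and `√(exp (-Φₙ))`
scaled to unit length in `L²(μ)`. Scaling to unit length is Lipschitz away from the origin,
`‖u‖ ‖u/‖u‖ - v/‖v‖‖ ≤ 2 ‖u - v‖`, and `v ↦ √(exp (-‖y - v‖² / 2))` is `1/2`-Lipschitz. Together
these give the explicit rate `Z ∫ (√(exp (-Φ) / Z) - √(exp (-Φₙ) / Zₙ))² ≤ ∫ ‖G - Gₙ‖²`.
-/

lemma norm_mul_norm_normalize_sub_le {E : Type*} [NormedAddCommGroup E] [NormedSpace ℝ E]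
    (u v : E) :
    ‖u‖ * ‖NormedSpace.normalize u - NormedSpace.normalize v‖ ≤ 2 * ‖u - v‖ := by
  have norm_normalize_le : ‖NormedSpace.normalize v‖ ≤ 1 := by
    rcases eq_or_ne v 0 with rfl | hv
    · simp
    · exact (NormedSpace.norm_normalize hv).le
  calc ‖u‖ * ‖NormedSpace.normalize u - NormedSpace.normalize v‖
      = ‖‖u‖ • (NormedSpace.normalize u - NormedSpace.normalize v)‖ := by rw [norm_smul, norm_norm]
    _ = ‖(u - v) + (‖v‖ - ‖u‖) • NormedSpace.normalize v‖ := by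
        rw [smul_sub, sub_smul, NormedSpace.norm_smul_normalize, NormedSpace.norm_smul_normalize]
        congr 1
        abel
    _ ≤ ‖u - v‖ + |‖v‖ - ‖u‖| * ‖NormedSpace.normalize v‖ := by
        simpa only [norm_smul, Real.norm_eq_abs] using
          norm_add_le (u - v) ((‖v‖ - ‖u‖) • NormedSpace.normalize v)
    _ ≤ ‖u - v‖ + ‖u - v‖ * 1 := by
        gcongr
        rw [norm_sub_rev u v]
        exact abs_norm_sub_norm_le v u
    _ = 2 * ‖u - v‖ := by ring

lemma lipschitzWith_one_exp_neg_sq : LipschitzWith 1 fun t : ℝ ↦ exp (-t ^ 2) := by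
  have hderiv (t : ℝ) : HasDerivAt (fun t : ℝ ↦ exp (-t ^ 2)) (exp (-t ^ 2) * -(2 * t)) t := by
    simpa using ((hasDerivAt_pow 2 t).neg).exp
  refine lipschitzWith_of_nnnorm_deriv_le (fun t ↦ (hderiv t).differentiableAt) fun t ↦ ?_
  have two_mul_abs_le : 2 * |t| ≤ exp (t ^ 2) := by
    nlinarith [add_one_le_exp (t ^ 2), sq_nonneg (|t| - 1), sq_abs t]
  rw [(hderiv t).deriv, ← NNReal.coe_le_coe, coe_nnnorm, NNReal.coe_one]
  calc ‖exp (-t ^ 2) * -(2 * t)‖ = exp (-t ^ 2) * (2 * |t|) := by simp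
    _ ≤ exp (-t ^ 2) * exp (t ^ 2) := by gcongr
    _ = 1 := by rw [← exp_add, neg_add_cancel, exp_zero]

section Hellinger

variable {X : Type*} [MeasurableSpace X] {μ : Measure X}

lemma norm_toLp_two_sq {E : Type*} [NormedAddCommGroup E] {f : X → E} (hf : MemLp f 2 μ) :
    ‖hf.toLp f‖ ^ 2 = ∫ x, ‖f x‖ ^ 2 ∂μ := by
  have integral_sq_nonneg : 0 ≤ ∫ x, ‖f x‖ ^ 2 ∂μ := integral_nonneg fun x ↦ by positivity
  rw [Lp.norm_toLp, hf.eLpNorm_eq_integral_rpow_norm two_ne_zero ENNReal.ofNat_ne_top]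
  simp only [ENNReal.toReal_ofNat, rpow_ofNat]
  rw [ENNReal.toReal_ofReal (by positivity), ← rpow_natCast, ← rpow_mul integral_sq_nonneg]
  norm_num

lemma memLp_two_sqrt {f : X → ℝ} (hf : Integrable f μ) : MemLp (fun x ↦ √(f x)) 2 μ := by
  rw [memLp_two_iff_integrable_sq (continuous_sqrt.comp_aestronglyMeasurable hf.1)]
  simpa only [sq_sqrt'] using hf.pos_part

/-- The squared Hellinger distance, without the conventional factor `1/2`, between the probability
measures whose densities with respect to `μ` are proportional to `f` and `g`. -/
noncomputable def hellingerSq (μ : Measure X) (f g : X → ℝ) : ℝ :=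
  ∫ x, (√(f x / ∫ z, f z ∂μ) - √(g x / ∫ z, g z ∂μ)) ^ 2 ∂μ

lemma hellingerSq_nonneg (μ : Measure X) (f g : X → ℝ) : 0 ≤ hellingerSq μ f g :=
  integral_nonneg fun _ ↦ sq_nonneg _

variable {f g : X → ℝ}

lemma norm_toLp_sqrt_sq (hf : Integrable f μ) (hf₀ : 0 ≤ᵐ[μ] f) :
    ‖(memLp_two_sqrt hf).toLp‖ ^ 2 = ∫ x, f x ∂μ := by
  rw [norm_toLp_two_sq]
  refine integral_congr_ae ?_
  filter_upwards [hf₀] with x hx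
  rw [norm_eq_abs, sq_abs, sq_sqrt hx]

lemma hellingerSq_eq_norm_normalize_sub_sq (hf : Integrable f μ) (hf₀ : 0 ≤ᵐ[μ] f)
    (hg : Integrable g μ) (hg₀ : 0 ≤ᵐ[μ] g) :
    hellingerSq μ f g =
      ‖NormedSpace.normalize (memLp_two_sqrt hf).toLp -
        NormedSpace.normalize (memLp_two_sqrt hg).toLp‖ ^ 2 := by
  have norm_toLp_sqrt {h : X → ℝ} (hh : Integrable h μ) (hh₀ : 0 ≤ᵐ[μ] h) :
      ‖(memLp_two_sqrt hh).toLp‖ = √(∫ x, h x ∂μ) := by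
    rw [← norm_toLp_sqrt_sq hh hh₀, sqrt_sq (norm_nonneg _)]
  simp only [NormedSpace.normalize, norm_toLp_sqrt hf hf₀, norm_toLp_sqrt hg hg₀]
  rw [← MemLp.toLp_const_smul, ← MemLp.toLp_const_smul, ← MemLp.toLp_sub, norm_toLp_two_sq]
  refine integral_congr_ae ?_
  filter_upwards [hf₀, hg₀] with x hfx hgx
  rw [sqrt_div hfx, sqrt_div hgx]
  simp only [Pi.sub_apply, Pi.smul_apply, smul_eq_mul, norm_eq_abs, sq_abs, div_eq_inv_mul]

lemma integral_mul_hellingerSq_le (hf : Integrable f μ) (hf₀ : 0 ≤ᵐ[μ] f)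
    (hg : Integrable g μ) (hg₀ : 0 ≤ᵐ[μ] g) :
    (∫ x, f x ∂μ) * hellingerSq μ f g ≤ 4 * ∫ x, (√(f x) - √(g x)) ^ 2 ∂μ := by
  set u := (memLp_two_sqrt hf).toLp
  set v := (memLp_two_sqrt hg).toLp
  calc (∫ x, f x ∂μ) * hellingerSq μ f g
      = (‖u‖ * ‖NormedSpace.normalize u - NormedSpace.normalize v‖) ^ 2 := by
        rw [← norm_toLp_sqrt_sq hf hf₀, hellingerSq_eq_norm_normalize_sub_sq hf hf₀ hg hg₀,
          mul_pow]
    _ ≤ (2 * ‖u - v‖) ^ 2 :=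
        pow_le_pow_left₀ (by positivity) (norm_mul_norm_normalize_sub_le u v) 2
    _ = 4 * ∫ x, (√(f x) - √(g x)) ^ 2 ∂μ := by
        rw [mul_pow, ← MemLp.toLp_sub, norm_toLp_two_sq]
        norm_num [sq_abs]

end Hellinger

section GaussianLikelihood

variable {X E : Type*} [MeasurableSpace X] {μ : Measure X} [NormedAddCommGroup E]

/-- The likelihood `exp (-‖y - v‖² / 2)` of the observation `y` under standard Gaussian noise
centred at the model output `v`, without its normalising constant. -/
noncomputable def gaussianLikelihood (y v : E) : ℝ :=
  exp (-((1 / 2) * ‖y - v‖ ^ 2))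

lemma gaussianLikelihood_nonneg (y v : E) : 0 ≤ gaussianLikelihood y v :=
  (exp_pos _).le

lemma gaussianLikelihood_le_one (y v : E) : gaussianLikelihood y v ≤ 1 :=
  exp_le_one_iff.2 (neg_nonpos.2 (by positivity))

lemma continuous_gaussianLikelihood (y : E) : Continuous (gaussianLikelihood y) := by
  unfold gaussianLikelihood
  fun_prop

lemma sqrt_gaussianLikelihood (y v : E) :
    √(gaussianLikelihood y v) = exp (-(‖y - v‖ / 2) ^ 2) := by
  rw [gaussianLikelihood, ← exp_half]
  ring_nf

lemma abs_sqrt_gaussianLikelihood_sub_le (y v w : E) :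
    |√(gaussianLikelihood y v) - √(gaussianLikelihood y w)| ≤ 1 / 2 * ‖v - w‖ :=
  calc |√(gaussianLikelihood y v) - √(gaussianLikelihood y w)|
      ≤ |‖y - v‖ / 2 - ‖y - w‖ / 2| := by
        simpa [sqrt_gaussianLikelihood, Real.dist_eq] using
          lipschitzWith_one_exp_neg_sq.dist_le_mul (‖y - v‖ / 2) (‖y - w‖ / 2)
    _ = 1 / 2 * |‖y - v‖ - ‖y - w‖| := by
        rw [← sub_div, abs_div, abs_two]
        ring
    _ ≤ 1 / 2 * ‖v - w‖ := by
        gcongr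
        simpa [norm_sub_rev w v] using abs_norm_sub_norm_le (y - v) (y - w)

variable {G H : X → E}

lemma integrable_gaussianLikelihood_comp [IsFiniteMeasure μ] (y : E)
    (hG : AEStronglyMeasurable G μ) : Integrable (gaussianLikelihood y ∘ G) μ :=
  .of_bound ((continuous_gaussianLikelihood y).comp_aestronglyMeasurable hG) 1 <|
    .of_forall fun _ ↦ by
      simpa [abs_of_nonneg (gaussianLikelihood_nonneg _ _)] using gaussianLikelihood_le_one _ _

lemma integrable_gaussianLikelihood_comp_of_memLp_sub {y : E}
    (hG : Integrable (gaussianLikelihood y ∘ G) μ) (hH : AEStronglyMeasurable H μ)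
    (hGH : MemLp (G - H) 2 μ) : Integrable (gaussianLikelihood y ∘ H) μ := by
  have sqrt_memLp_G : MemLp (fun x ↦ √(gaussianLikelihood y (G x))) 2 μ := memLp_two_sqrt hG
  have sqrt_meas_H : AEStronglyMeasurable (fun x ↦ √(gaussianLikelihood y (H x))) μ :=
    (continuous_gaussianLikelihood y).sqrt.comp_aestronglyMeasurable hH
  have sqrt_sub_memLp :
      MemLp (fun x ↦ √(gaussianLikelihood y (G x)) - √(gaussianLikelihood y (H x))) 2 μ :=
    hGH.of_le_mul (sqrt_memLp_G.1.sub sqrt_meas_H) <|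
      .of_forall fun x ↦ abs_sqrt_gaussianLikelihood_sub_le y (G x) (H x)
  have sqrt_memLp_H : MemLp (fun x ↦ √(gaussianLikelihood y (H x))) 2 μ := by
    simpa [Pi.sub_def] using sqrt_memLp_G.sub sqrt_sub_memLp
  simpa only [sq_sqrt (gaussianLikelihood_nonneg _ _)] using! sqrt_memLp_H.integrable_sq

lemma integral_mul_hellingerSq_gaussianLikelihood_le {y : E}
    (hG : Integrable (gaussianLikelihood y ∘ G) μ) (hH : AEStronglyMeasurable H μ)
    (hGH : MemLp (G - H) 2 μ) :
    (∫ x, gaussianLikelihood y (G x) ∂μ) *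
        hellingerSq μ (gaussianLikelihood y ∘ G) (gaussianLikelihood y ∘ H) ≤
      ∫ x, ‖G x - H x‖ ^ 2 ∂μ := by
  have nonneg_comp (F : X → E) : 0 ≤ᵐ[μ] gaussianLikelihood y ∘ F :=
    .of_forall fun x ↦ gaussianLikelihood_nonneg y (F x)
  have sq_le (x : X) : (√(gaussianLikelihood y (G x)) - √(gaussianLikelihood y (H x))) ^ 2 ≤
      1 / 4 * ‖G x - H x‖ ^ 2 :=
    calc _ ≤ (1 / 2 * ‖G x - H x‖) ^ 2 := by
          rw [← sq_abs]
          gcongr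
          exact abs_sqrt_gaussianLikelihood_sub_le y _ _
      _ = 1 / 4 * ‖G x - H x‖ ^ 2 := by ring
  have integrable_sq : Integrable (fun x ↦ ‖G x - H x‖ ^ 2) μ := hGH.norm.integrable_sq
  calc (∫ x, gaussianLikelihood y (G x) ∂μ) *
        hellingerSq μ (gaussianLikelihood y ∘ G) (gaussianLikelihood y ∘ H)
      ≤ 4 * ∫ x, (√(gaussianLikelihood y (G x)) - √(gaussianLikelihood y (H x))) ^ 2 ∂μ :=
        integral_mul_hellingerSq_le hG (nonneg_comp G)
          (integrable_gaussianLikelihood_comp_of_memLp_sub hG hH hGH) (nonneg_comp H)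
    _ ≤ 4 * ∫ x, 1 / 4 * ‖G x - H x‖ ^ 2 ∂μ := by
        refine mul_le_mul_of_nonneg_left ?_ zero_le_four
        exact integral_mono_of_nonneg (.of_forall fun _ ↦ sq_nonneg _)
          (integrable_sq.const_mul _) (.of_forall sq_le)
    _ = ∫ x, ‖G x - H x‖ ^ 2 ∂μ := by
        rw [integral_const_mul]
        ring

theorem hellinger_convergence_general [NeZero μ] {ι : Type*} {l : Filter ι} {y : E}
    {Gn : ι → X → E}
    (hG : Integrable (gaussianLikelihood y ∘ G) μ) (hGn : ∀ i, AEStronglyMeasurable (Gn i) μ)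
    (hsub : ∀ i, MemLp (G - Gn i) 2 μ)
    (hconv : Tendsto (fun i ↦ ∫ x, ‖G x - Gn i x‖ ^ 2 ∂μ) l (nhds 0)) :
    Tendsto (fun i ↦ hellingerSq μ (gaussianLikelihood y ∘ G) (gaussianLikelihood y ∘ Gn i))
      l (nhds 0) := by
  have evidence_pos : 0 < ∫ x, gaussianLikelihood y (G x) ∂μ := integral_exp_pos hG
  refine squeeze_zero (fun i ↦ hellingerSq_nonneg _ _ _) (fun i ↦ ?_)
    (by simpa using hconv.div_const (∫ x, gaussianLikelihood y (G x) ∂μ))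
  rw [le_div_iff₀' evidence_pos]
  exact integral_mul_hellingerSq_gaussianLikelihood_le hG (hGn i) (hsub i)

end GaussianLikelihood

/-- Convergence statement of Theorem 3.2: if the surrogate forward maps converge
to the true forward map in `L²(μ₀)`, then the (twice squared) Hellinger distance
between the surrogate posterior and the true posterior converges to zero. -/
theorem hellinger_convergence
    {X : Type*} [MeasurableSpace X]
    (μ₀ : Measure X) [IsProbabilityMeasure μ₀]
    (k : ℕ) (hk : 0 < k) (y : EuclideanSpace ℝ (Fin k)) (M : ℝ) (hM : 0 < M)
    (G : X → EuclideanSpace ℝ (Fin k)) (Gn : ℕ → X → EuclideanSpace ℝ (Fin k))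
    (hG : Measurable G) (hGn : ∀ n, Measurable (Gn n))
    (hGbd : ∀ w : X, ‖G w‖ ≤ M) (hGnbd : ∀ n, ∀ w : X, ‖Gn n w‖ ≤ M)
    (hconv : Tendsto (fun n => ∫ w, ‖G w - Gn n w‖ ^ 2 ∂μ₀) atTop (nhds 0)) :
    Tendsto
      (fun n => ∫ w,
        (Real.sqrt (Real.exp (-((1/2) * ‖y - G w‖ ^ 2))
            / ∫ v, Real.exp (-((1/2) * ‖y - G v‖ ^ 2)) ∂μ₀)
         - Real.sqrt (Real.exp (-((1/2) * ‖y - Gn n w‖ ^ 2))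
            / ∫ v, Real.exp (-((1/2) * ‖y - Gn n v‖ ^ 2)) ∂μ₀)) ^ 2 ∂μ₀)
      atTop (nhds 0) :=
  hellinger_convergence_general (integrable_gaussianLikelihood_comp y hG.aestronglyMeasurable)
    (fun n ↦ (hGn n).aestronglyMeasurable)
    (fun n ↦ (MemLp.of_bound hG.aestronglyMeasurable M (.of_forall hGbd)).sub
      (MemLp.of_bound (hGn n).aestronglyMeasurable M (.of_forall (hGnbd n))))
    hconv
end
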